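/- arXiv:2001.01836 — 2 statements merged into one kernel-verified Lean document; each statement's English description precedes it below -/
import Mathlib

section
/- Fix m ≥ 2 and a strictly ordered vector (z1, …, z_{m−1}) with z1 < … < z_{m−1}. Then the mutual information of the m-threshold quantizer obtained by appending a final threshold t converges, as t → ∞, to the mutual information of the (m−1)-threshold quantizer: lim_{t→∞} I_m(z1, …, z_{m−1}, t) = I_{m−1}(z1, …, z_{m−1}). -/
/-!
A point `y` lies in the odd union for `(z, t)` iff it lies in the one for `z` as soon as `t > y`
(`mem_oddUnion_snoc`). So the indicators of the odd unions converge pointwise as `t → ∞`, and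
dominated convergence, with the density itself as the bound, gives convergence of `A11` and `A22`.
The mutual information is a continuous function of these two numbers, because `x * log x` is
continuous on all of `ℝ` (`continuous_Hb`).
-/

open MeasureTheory Real Set Filter

/-- Binary entropy function. -/
noncomputable def Hb (w : ℝ) : ℝ := -(w * Real.log w) - (1 - w) * Real.log (1 - w)

/-- The union of the odd-indexed pieces of the partition of ℝ induced by the
thresholds `h 0 < h 1 < ⋯ < h (n-1)`, i.e. `(-∞, h 0) ∪ [h 1, h 2) ∪ ⋯`:
a point `y` belongs to it iff the number of thresholds `≤ y` is even. -/
def oddUnion {n : ℕ} (h : Fin n → ℝ) : Set ℝ :=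
  {y | Even (Finset.univ.filter (fun i => h i ≤ y)).card}

noncomputable def A11 (φ0 : ℝ → ℝ) {n : ℕ} (h : Fin n → ℝ) : ℝ := ∫ y in oddUnion h, φ0 y

noncomputable def A22 (φ1 : ℝ → ℝ) {n : ℕ} (h : Fin n → ℝ) : ℝ := ∫ y in (oddUnion h)ᶜ, φ1 y

noncomputable def q0 (p0 p1 : ℝ) (φ0 φ1 : ℝ → ℝ) {n : ℕ} (h : Fin n → ℝ) : ℝ :=
  p0 * A11 φ0 h + p1 * (1 - A22 φ1 h)

/-- Mutual information of the quantizer with thresholding vector `h`. -/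
noncomputable def MI (p0 p1 : ℝ) (φ0 φ1 : ℝ → ℝ) {n : ℕ} (h : Fin n → ℝ) : ℝ :=
  Hb (q0 p0 p1 φ0 φ1 h) - p0 * Hb (A11 φ0 h) - p1 * Hb (A22 φ1 h)

theorem continuous_Hb : Continuous Hb := by
  have h := Real.continuous_mul_log
  exact h.neg.sub (h.comp (continuous_const.sub continuous_id))

theorem measurableSet_oddUnion {n : ℕ} (h : Fin n → ℝ) : MeasurableSet (oddUnion h) := by
  have hm : Measurable fun y : ℝ => ∑ i : Fin n, if h i ≤ y then 1 else 0 :=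
    Finset.measurable_sum _ fun i _ =>
      Measurable.ite measurableSet_Ici measurable_const measurable_const
  have he : oddUnion h = (fun y : ℝ => ∑ i : Fin n, if h i ≤ y then 1 else 0) ⁻¹'
      {k : ℕ | Even k} := by
    ext y
    simp [oddUnion]
  rw [he]
  exact hm (MeasurableSet.of_discrete)

/-- An appended threshold does not affect the classification of points below it. -/
theorem mem_oddUnion_snoc {n : ℕ} (z : Fin n → ℝ) {t y : ℝ} (hy : y < t) :
    y ∈ oddUnion (Fin.snoc z t : Fin (n + 1) → ℝ) ↔ y ∈ oddUnion z := by
  simp only [oddUnion, Set.mem_setOf_eq, Finset.card_filter, Fin.sum_univ_castSucc,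
    Fin.snoc_castSucc, Fin.snoc_last, not_le.mpr hy, if_false, add_zero]

/-- Dominated convergence for set integrals over a family of sets that is pointwise eventually
constant. -/
theorem tendsto_setIntegral_of_eventually_mem_iff {φ : ℝ → ℝ} (hφ : Integrable φ)
    {S : ℝ → Set ℝ} {T : Set ℝ} (hS : ∀ t, MeasurableSet (S t)) (hT : MeasurableSet T)
    (h : ∀ y, ∀ᶠ t in atTop, (y ∈ S t ↔ y ∈ T)) :
    Tendsto (fun t => ∫ y in S t, φ y) atTop (nhds (∫ y in T, φ y)) := by
  simp_rw [← integral_indicator (hS _), ← integral_indicator hT]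
  refine tendsto_integral_filter_of_dominated_convergence (fun y => ‖φ y‖) ?_ ?_ hφ.norm ?_
  · exact Eventually.of_forall fun t => hφ.aestronglyMeasurable.indicator (hS t)
  · exact Eventually.of_forall fun t => ae_of_all _ fun y => norm_indicator_le_norm_self _ _
  · refine ae_of_all _ fun y => tendsto_const_nhds.congr' ?_
    filter_upwards [h y] with t ht
    by_cases hy : y ∈ T
    · rw [Set.indicator_of_mem hy, Set.indicator_of_mem (ht.2 hy)]
    · rw [Set.indicator_of_notMem hy, Set.indicator_of_notMem (mt ht.1 hy)]

/-- for `m = n + 2 ≥ 2` and a strictly ordered `(m-1)`-vector `z`,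
appending a final threshold `t` and letting `t → ∞`, the `m`-threshold mutual
information converges to the `(m-1)`-threshold one. -/
theorem stmt_2
    (p0 p1 : ℝ) (hp0 : p0 ∈ Set.Ioo (0:ℝ) 1) (hp1 : p1 ∈ Set.Ioo (0:ℝ) 1)
    (hp : p0 + p1 = 1)
    (φ0 φ1 : ℝ → ℝ) (hφ0 : ∀ y, 0 ≤ φ0 y) (hφ1 : ∀ y, 0 ≤ φ1 y)
    (hi0 : Integrable φ0) (hi1 : Integrable φ1)
    (hI0 : ∫ y, φ0 y = 1) (hI1 : ∫ y, φ1 y = 1)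
    (n : ℕ) (z : Fin (n + 1) → ℝ) (hmono : StrictMono z) :
    Filter.Tendsto (fun t : ℝ => MI p0 p1 φ0 φ1 (Fin.snoc z t : Fin (n + 2) → ℝ))
      Filter.atTop (nhds (MI p0 p1 φ0 φ1 z)) := by
  have hev : ∀ y : ℝ, ∀ᶠ t in atTop,
      (y ∈ oddUnion (Fin.snoc z t : Fin (n + 2) → ℝ) ↔ y ∈ oddUnion z) := fun y =>
    (eventually_gt_atTop y).mono fun t ht => mem_oddUnion_snoc z ht
  have h1 : Tendsto (fun t : ℝ => A11 φ0 (Fin.snoc z t : Fin (n + 2) → ℝ)) atTop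
      (nhds (A11 φ0 z)) :=
    tendsto_setIntegral_of_eventually_mem_iff hi0 (fun _ => measurableSet_oddUnion _)
      (measurableSet_oddUnion _) hev
  have h2 : Tendsto (fun t : ℝ => A22 φ1 (Fin.snoc z t : Fin (n + 2) → ℝ)) atTop
      (nhds (A22 φ1 z)) :=
    tendsto_setIntegral_of_eventually_mem_iff hi1 (fun _ => (measurableSet_oddUnion _).compl)
      (measurableSet_oddUnion _).compl fun y => (hev y).mono fun _ ht => not_congr ht
  have hq : Tendsto (fun t : ℝ => q0 p0 p1 φ0 φ1 (Fin.snoc z t : Fin (n + 2) → ℝ)) atTop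
      (nhds (q0 p0 p1 φ0 φ1 z)) :=
    (h1.const_mul p0).add ((h2.const_sub 1).const_mul p1)
  exact (((continuous_Hb.tendsto _).comp hq).sub
    (((continuous_Hb.tendsto _).comp h1).const_mul p0)).sub
    (((continuous_Hb.tendsto _).comp h2).const_mul p1)
end

section
/- Let p0, p1 ∈ (0,1) with p0 + p1 = 1 and let f, g : (0,1) → (0,1) be differentiable functions satisfying f'(a) = −(a·p0/((1−a)·p1))·g'(a) for all a ∈ (0,1). Define the mutual information I(a) = H_b(p0·f(a) + p1·(1−g(a))) − p0·H_b(f(a)) − p1·H_b(g(a)) and F(a) = log(f(a)/(1−f(a))) + (p1²·(a−1)/(p0²·a))·log(g(a)/(1−g(a))) − ((p0²·a + p1²·(1−a))/(p0²·a))·log((p0·f(a) + p1·(1−g(a)))/(p0·(1−f(a)) + p1·g(a))). Then I is differentiable and I'(a) = p0·f'(a)·F(a) for all a ∈ (0,1). -/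
/-- The mutual information as a function of the posterior level `a`. -/
noncomputable def Iq (p0 p1 : ℝ) (f g : ℝ → ℝ) (a : ℝ) : ℝ :=
  Hb (p0 * f a + p1 * (1 - g a)) - p0 * Hb (f a) - p1 * Hb (g a)

/-- The function `F` whose zero characterizes the stationary points of the mutual
information as a function of the posterior level `a`. -/
noncomputable def Fq (p0 p1 : ℝ) (f g : ℝ → ℝ) (a : ℝ) : ℝ :=
  Real.log (f a / (1 - f a)) +
    (p1 ^ 2 * (a - 1) / (p0 ^ 2 * a)) * Real.log (g a / (1 - g a)) -
    ((p0 ^ 2 * a + p1 ^ 2 * (1 - a)) / (p0 ^ 2 * a)) *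
      Real.log ((p0 * f a + p1 * (1 - g a)) / (p0 * (1 - f a) + p1 * g a))

theorem hasDerivAt_Hb {w : ℝ} (h0 : 0 < w) (h1 : w < 1) :
    HasDerivAt Hb (-Real.log (w / (1 - w))) w := by
  have hw : w ≠ 0 := h0.ne'
  have hw1 : 1 - w ≠ 0 := (sub_pos.2 h1).ne'
  have hid := hasDerivAt_id w
  have hsub : HasDerivAt (fun x : ℝ => 1 - x) (-1) w := by
    simpa using hid.const_sub 1
  have h := (hid.mul (Real.hasDerivAt_log hw)).neg.sub (hsub.mul (hsub.log hw1))
  refine h.congr_deriv ?_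
  rw [Real.log_div hw hw1]
  simp only [id]
  field_simp
  ring

/-- `I` is differentiable on `(0,1)` with `I'(a) = p0·f'(a)·F(a)`. -/
theorem stmt_13
    (p0 p1 : ℝ) (hp0 : p0 ∈ Set.Ioo (0:ℝ) 1) (hp1 : p1 ∈ Set.Ioo (0:ℝ) 1)
    (hp : p0 + p1 = 1)
    (f g f' g' : ℝ → ℝ)
    (hfmem : ∀ a ∈ Set.Ioo (0:ℝ) 1, f a ∈ Set.Ioo (0:ℝ) 1)
    (hgmem : ∀ a ∈ Set.Ioo (0:ℝ) 1, g a ∈ Set.Ioo (0:ℝ) 1)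
    (hfd : ∀ a ∈ Set.Ioo (0:ℝ) 1, HasDerivAt f (f' a) a)
    (hgd : ∀ a ∈ Set.Ioo (0:ℝ) 1, HasDerivAt g (g' a) a)
    (hrel : ∀ a ∈ Set.Ioo (0:ℝ) 1, f' a = -(a * p0 / ((1 - a) * p1)) * g' a) :
    ∀ a ∈ Set.Ioo (0:ℝ) 1,
      HasDerivAt (Iq p0 p1 f g) (p0 * f' a * Fq p0 p1 f g a) a := by
  intro a ha
  obtain ⟨ha0, ha1⟩ := ha
  obtain ⟨hf0, hf1⟩ := hfmem a ⟨ha0, ha1⟩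
  obtain ⟨hg0, hg1⟩ := hgmem a ⟨ha0, ha1⟩
  have hf := hfd a ⟨ha0, ha1⟩
  have hg := hgd a ⟨ha0, ha1⟩
  have hr := hrel a ⟨ha0, ha1⟩
  have hp0pos : 0 < p0 := hp0.1
  have hp1pos : 0 < p1 := hp1.1
  have hq_compl : 1 - (p0 * f a + p1 * (1 - g a)) = p0 * (1 - f a) + p1 * g a := by
    linear_combination -hp
  have hq0 : 0 < p0 * f a + p1 * (1 - g a) :=
    add_pos (mul_pos hp0pos hf0) (mul_pos hp1pos (sub_pos.2 hg1))
  have hq1 : p0 * f a + p1 * (1 - g a) < 1 := by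
    have : 0 < p0 * (1 - f a) + p1 * g a :=
      add_pos (mul_pos hp0pos (sub_pos.2 hf1)) (mul_pos hp1pos hg0)
    linarith
  have hq : HasDerivAt (fun x => p0 * f x + p1 * (1 - g x)) (p0 * f' a + p1 * (-g' a)) a :=
    (hf.const_mul p0).add ((hg.const_sub 1).const_mul p1)
  have hHq : HasDerivAt (fun x => Hb (p0 * f x + p1 * (1 - g x))) _ a :=
    HasDerivAt.comp (h₂ := Hb) a (hasDerivAt_Hb hq0 hq1) hq
  have hI : HasDerivAt (Iq p0 p1 f g) _ a :=
    (hHq.sub (((hasDerivAt_Hb hf0 hf1).comp a hf).const_mul p0)).sub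
      (((hasDerivAt_Hb hg0 hg1).comp a hg).const_mul p1)
  refine hI.congr_deriv ?_
  have ha' : 1 - a ≠ 0 := (sub_pos.2 ha1).ne'
  rw [hq_compl, Fq, hr]
  -- The identity is linear in the three logarithms, so they are treated as free variables.
  generalize Real.log ((p0 * f a + p1 * (1 - g a)) / (p0 * (1 - f a) + p1 * g a)) = Lq
  generalize Real.log (f a / (1 - f a)) = Lf
  generalize Real.log (g a / (1 - g a)) = Lg
  field_simp
  ring
end
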